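/- arXiv:2109.00595 — 2 statements merged into one kernel-verified Lean document; each statement's English description precedes it below -/
import Mathlib

section
/- Let r ≥ 1 be an integer, t > 0, and let f : ℝ → ℝ be a polynomial function of degree at most r−1, not identically zero. Then there exist a sign ε ∈ {+1, −1} and reals 0 ≤ s₁ ≤ s₂ ≤ ⋯ ≤ s_{r−1} ≤ t such that, setting s₀ := 0 and s_r := t, ∫₀ᵗ |f(s)| ds = ε · Σ_{q=0}^{r−1} (−1)^q ∫_{s_q}^{s_{q+1}} f(s) ds. -/
theorem sign_partition (t : ℝ) (ht : 0 < t) (n : ℕ) : ∀ (P : Polynomial ℝ), P ≠ 0 → P.natDegree ≤ n →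
    ∃ ε : ℝ, (ε = 1 ∨ ε = -1) ∧ ∃ s : ℕ → ℝ, Monotone s ∧ s 0 = 0 ∧ (∀ k, n + 1 ≤ k → s k = t) ∧
      ∀ q x, s q < x → x < s (q + 1) → |P.eval x| = ε * (-1) ^ q * P.eval x := by
  induction n with
  | zero =>
    intro P hP hd
    obtain ⟨a, rfl⟩ : ∃ a, P = Polynomial.C a := ⟨_, Polynomial.eq_C_of_natDegree_le_zero hd⟩
    have hs : ∃ ε : ℝ, (ε = 1 ∨ ε = -1) ∧ |a| = ε * a := by
      rcases abs_choice a with h | h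
      · exact ⟨1, Or.inl rfl, by simpa using h⟩
      · exact ⟨-1, Or.inr rfl, by simpa using h⟩
    obtain ⟨ε, h1, h2⟩ := hs
    refine ⟨ε, h1, fun k => if k = 0 then 0 else t, ?_, by simp, ?_, ?_⟩
    · apply monotone_nat_of_le_succ
      intro k
      rcases k with _ | k <;> simp [ht.le]
    · intro k hk
      simp; omega
    · intro q x
      rcases q with _ | q
      · simp [h2]
      · simp
        intro h h'
        linarith
  | succ n ih =>
    intro P hP hd
    by_cases hroot : ∃ c, 0 < c ∧ c < t ∧ P.eval c = 0
    · obtain ⟨c, hc0, hct, hc⟩ := hroot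
      obtain ⟨Q, rfl⟩ := Polynomial.dvd_iff_isRoot.mpr hc
      have hQ : Q ≠ 0 := right_ne_zero_of_mul hP
      have hdQ : Q.natDegree ≤ n := by
        rw [Polynomial.natDegree_mul (Polynomial.X_sub_C_ne_zero c) hQ,
          Polynomial.natDegree_X_sub_C] at hd
        omega
      obtain ⟨ε, hε, s, hm, h0, hend, hs⟩ := ih Q hQ hdQ
      have h0le : ∀ k, 0 ≤ s k := fun k => h0 ▸ hm (Nat.zero_le k)
      refine ⟨-ε, ?_, fun k => max (s (k - 1)) (min (s k) c), ?_, ?_, ?_, ?_⟩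
      · rcases hε with rfl | rfl <;> simp
      · intro i j hij
        exact max_le_max (hm (by omega)) (min_le_min (hm hij) le_rfl)
      · simp [h0, hc0.le]
      · intro k hk
        have e1 := hend (k - 1) (by omega)
        have e2 := hend k (by omega)
        simp [e1, e2, hct.le]
      · intro q x hq1 hq2
        simp only [Nat.add_sub_cancel] at hq1 hq2
        simp only [Polynomial.eval_mul, Polynomial.eval_sub, Polynomial.eval_X, Polynomial.eval_C,
          abs_mul]
        rw [max_lt_iff, min_lt_iff] at hq1
        rw [lt_max_iff, lt_min_iff] at hq2
        rcases lt_trichotomy x c with hx | hx | hx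
        · have h1 : s q < x := by
            rcases hq1.2 with h | h <;> linarith
          have h2 : x < s (q + 1) := by
            rcases hq2 with h | h
            · linarith
            · exact h.1
          rw [hs q x h1 h2, abs_of_neg (by linarith)]
          ring
        · simp [hx]
        · have h2 : x < s q := by
            rcases hq2 with h | h
            · exact h
            · linarith [h.2]
          rcases q with _ | q
          · linarith
          · rw [hs q x (by simpa using hq1.1) h2, abs_of_pos (by linarith)]
            ring
    · push Not at hroot
      have hsgn : ∃ ε : ℝ, (ε = 1 ∨ ε = -1) ∧ ∀ x, 0 < x → x < t → |P.eval x| = ε * P.eval x := by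
        have key : ∀ x ∈ Set.Ioo 0 t, ∀ y ∈ Set.Ioo 0 t, P.eval x < 0 → 0 < P.eval y → False := by
          intro x hx y hy h1 h2
          obtain ⟨z, hz, hz0⟩ := isPreconnected_Ioo.intermediate_value hx hy
            (f := fun x => P.eval x) P.continuous.continuousOn ⟨h1.le, h2.le⟩
          exact hroot z hz.1 hz.2 hz0
        by_cases h : ∃ x ∈ Set.Ioo 0 t, P.eval x < 0
        · obtain ⟨x, hx, hx0⟩ := h
          refine ⟨-1, Or.inr rfl, fun y h1 h2 => ?_⟩
          rw [abs_of_nonpos (not_lt.mp fun h => key x hx y ⟨h1, h2⟩ hx0 h)]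
          ring
        · push Not at h
          refine ⟨1, Or.inl rfl, fun y h1 h2 => ?_⟩
          rw [abs_of_nonneg (h y ⟨h1, h2⟩)]
          ring
      obtain ⟨ε, h1, h2⟩ := hsgn
      refine ⟨ε, h1, fun k => if k = 0 then 0 else t, ?_, by simp, ?_, ?_⟩
      · apply monotone_nat_of_le_succ
        intro k
        rcases k with _ | k <;> simp [ht.le]
      · intro k hk
        simp; omega
      · intro q x
        rcases q with _ | q
        · simpa using h2 x
        · simp
          intro h h'
          linarith


open intervalIntegral

/-- The integral of the absolute value of a nonzero polynomial of degree at most `r−1`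
over `[0,t]` decomposes as a signed alternating sum of its integrals over consecutive
subintervals `[s_q, s_{q+1}]`, `q = 0,…,r−1`, where `0 = s₀ ≤ s₁ ≤ ⋯ ≤ s_{r−1} ≤ s_r = t`. -/
theorem integral_abs_poly_alternating (r : ℕ) (hr : 1 ≤ r) (t : ℝ) (ht : 0 < t)
    (P : Polynomial ℝ) (hP : P ≠ 0) (hdeg : P.natDegree ≤ r - 1) :
    ∃ ε : ℝ, (ε = 1 ∨ ε = -1) ∧
      ∃ s : Fin (r + 1) → ℝ, Monotone s ∧ s 0 = 0 ∧ s (Fin.last r) = t ∧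
        (∫ x in (0:ℝ)..t, |P.eval x|) =
          ε * ∑ q : Fin r,
            (-1 : ℝ) ^ (q : ℕ) * ∫ x in (s q.castSucc)..(s q.succ), P.eval x := by
  obtain ⟨ε, hε, s, hm, h0, hend, hs⟩ := sign_partition t ht (r - 1) P hP hdeg
  refine ⟨ε, hε, fun i => s i, fun i j h => hm h, by simpa using h0, ?_, ?_⟩
  · exact hend _ (by simp; omega)
  · simp only [Fin.val_castSucc, Fin.val_succ]
    rw [Fin.sum_univ_eq_sum_range
      (fun q : ℕ => (-1 : ℝ) ^ q * ∫ x in (s q)..(s (q + 1)), P.eval x) r]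
    have hr' : s r = t := hend r (by omega)
    have hc : Continuous fun x => |P.eval x| := P.continuous.abs
    have hsum := intervalIntegral.sum_integral_adjacent_intervals (a := s) (n := r)
      (f := fun x => |P.eval x|) (μ := MeasureTheory.volume)
      (fun k _ => hc.intervalIntegrable _ _)
    rw [h0, hr'] at hsum
    rw [← hsum, Finset.mul_sum]
    refine Finset.sum_congr rfl fun q _ => ?_
    rw [← mul_assoc, ← intervalIntegral.integral_const_mul]
    exact intervalIntegral.integral_congr_Ioo_of_le (hm (Nat.le_succ q))
      fun x hx => hs q x hx.1 hx.2
end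

section
/- Fix reals α < β with μ := (β−α)/2 and ν := (β+α)/2, a time t > 0, and x₀ ∈ ℝ³. For ε ∈ {+1,−1} and parameters 0 ≤ s₁ ≤ s₂ ≤ t, let x = x^ε(s₁,s₂) ∈ ℝ³ be the parametrized boundary point of the triple integrator reach set, and for k = 1,2,3 define ρ_k := ((4−k)!/(2μ)) ( x(k) − Σ_{ℓ=k}^{3} (t^(ℓ−k)/(ℓ−k)!) x₀(ℓ) ) − (1/2) ( ε t^(4−k) + (ν/μ) t^(4−k) ). Then the quartic implicit equation of the bounding surface holds: ρ₃⁴ − 4 ρ₃ ρ₁ + 3 ρ₂² = 0. -/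
/-- The parametrized boundary point `x^ε(s₁,s₂) ∈ ℝ³` of the triple integrator reach
set (`0`-indexed `k : Fin 3`; the `1`-indexed exponent `4−k` becomes `3−k`):
`x^ε(k) = Σ_{ℓ≥k} (t^(ℓ−k)/(ℓ−k)!) x₀(ℓ) + ν t^(3−k)/(3−k)!`
`+ ε (μ/(3−k)!) [ t^(3−k) + 2 s₁^(3−k) − 2 s₂^(3−k) ]`,
with `μ = (β−α)/2`, `ν = (β+α)/2`. -/
noncomputable def tripleBdryPoint (α β t : ℝ) (x₀ : Fin 3 → ℝ) (ε s₁ s₂ : ℝ) :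
    Fin 3 → ℝ :=
  fun k =>
    (∑ ℓ : Fin 3, if (k : ℕ) ≤ (ℓ : ℕ) then
        t ^ ((ℓ : ℕ) - (k : ℕ)) / Nat.factorial ((ℓ : ℕ) - (k : ℕ)) * x₀ ℓ else 0) +
      ((β + α) / 2) * t ^ (3 - (k : ℕ)) / Nat.factorial (3 - (k : ℕ)) +
      ε * (((β - α) / 2) / Nat.factorial (3 - (k : ℕ))) *
        (t ^ (3 - (k : ℕ)) + 2 * s₁ ^ (3 - (k : ℕ)) - 2 * s₂ ^ (3 - (k : ℕ)))

/-- The normalized coordinates `ρ_k` of a point `x ∈ ℝ³` (`0`-indexed `k : Fin 3`):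
`ρ_k := ((3−k)!/(2μ)) (x(k) − Σ_{ℓ≥k} (t^(ℓ−k)/(ℓ−k)!) x₀(ℓ))`
`− (1/2)(ε t^(3−k) + (ν/μ) t^(3−k))`. -/
noncomputable def tripleRho (α β t : ℝ) (x₀ : Fin 3 → ℝ) (ε : ℝ) (x : Fin 3 → ℝ) :
    Fin 3 → ℝ :=
  fun k =>
    (Nat.factorial (3 - (k : ℕ)) / (2 * ((β - α) / 2))) *
        (x k - ∑ ℓ : Fin 3, if (k : ℕ) ≤ (ℓ : ℕ) then
          t ^ ((ℓ : ℕ) - (k : ℕ)) / Nat.factorial ((ℓ : ℕ) - (k : ℕ)) * x₀ ℓ else 0) -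
      (1 / 2) * (ε * t ^ (3 - (k : ℕ)) +
        (((β + α) / 2) / ((β - α) / 2)) * t ^ (3 - (k : ℕ)))

/-- On the boundary, the normalized coordinates reduce to `ε (s₁^(3-k) - s₂^(3-k))`. -/
theorem tripleRho_bdry (α β : ℝ) (hαβ : α < β) (t : ℝ) (x₀ : Fin 3 → ℝ) (ε s₁ s₂ : ℝ)
    (k : Fin 3) :
    tripleRho α β t x₀ ε (tripleBdryPoint α β t x₀ ε s₁ s₂) k =
      ε * (s₁ ^ (3 - (k : ℕ)) - s₂ ^ (3 - (k : ℕ))) := by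
  have hμ : β - α ≠ 0 := sub_ne_zero.mpr hαβ.ne'
  have hf : (Nat.factorial (3 - (k : ℕ)) : ℝ) ≠ 0 := by positivity
  unfold tripleRho tripleBdryPoint
  generalize (Nat.factorial (3 - (k : ℕ)) : ℝ) = f at *
  generalize (∑ ℓ : Fin 3, if (k : ℕ) ≤ (ℓ : ℕ) then
        t ^ ((ℓ : ℕ) - (k : ℕ)) / Nat.factorial ((ℓ : ℕ) - (k : ℕ)) * x₀ ℓ else 0) = S
  generalize t ^ (3 - (k : ℕ)) = T
  generalize s₁ ^ (3 - (k : ℕ)) = A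
  generalize s₂ ^ (3 - (k : ℕ)) = B
  field_simp
  ring

/-- On the parametrized boundary of the triple integrator reach set, the quartic
implicit equation `ρ₃⁴ − 4 ρ₃ ρ₁ + 3 ρ₂² = 0` holds (`1`-indexed `ρ₁,ρ₂,ρ₃` are the
`0`-indexed `ρ 0, ρ 1, ρ 2`). -/
theorem triple_integrator_quartic (α β : ℝ) (hαβ : α < β) (t : ℝ) (ht : 0 < t)
    (x₀ : Fin 3 → ℝ) (ε : ℝ) (hε : ε = 1 ∨ ε = -1) (s₁ s₂ : ℝ)
    (h₁ : 0 ≤ s₁) (h₂ : s₁ ≤ s₂) (h₃ : s₂ ≤ t) :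
    (tripleRho α β t x₀ ε (tripleBdryPoint α β t x₀ ε s₁ s₂) 2) ^ 4 -
        4 * tripleRho α β t x₀ ε (tripleBdryPoint α β t x₀ ε s₁ s₂) 2 *
          tripleRho α β t x₀ ε (tripleBdryPoint α β t x₀ ε s₁ s₂) 0 +
        3 * (tripleRho α β t x₀ ε (tripleBdryPoint α β t x₀ ε s₁ s₂) 1) ^ 2 = 0 := by
  simp only [tripleRho_bdry α β hαβ]
  rcases hε with rfl | rfl <;> norm_num <;> ring
end
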